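/- Under assumptions (A) and (B), the partition function satisfies Z_N ~ |w| exp(N sup_{m̂ ∈ Δ̂} G(m̂)) as N → ∞; that is, lim_{N→∞} Z_N / (|w| exp(N sup_{m̂ ∈ Δ̂} G(m̂))) = 1. -/

import Mathlib

/-!
The proof is Laplace's method for lattice sums. Grouping configurations by their occupation numbers
(`sum_config_eq`, `card_fiber_counts`) turns `Z N` into a sum of multinomial coefficients times
`exp (N * F)` over the lattice points of the scaled simplex. Writing a multinomial coefficient as
`typeProb * exp (N * ent)` (`multinomial_mul_exp`), the normalized sum becomes
`∑ u, typeProb N u * exp (N * (G (u / N) - max G))`.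

Since `typeProb ≤ 1`, lattice points at distance more than `δ` from all maximizers contribute at
most `(N + 1) ^ d * exp (-ε N)`, where `ε` comes from compactness (`far_gap`), which is negligible.

Around a maximizer `M j` the sum is rewritten as an integral over unit cubes and rescaled by `√N`
(`sum_eq_integral_floor`, `integral_rescale`). Stirling's formula (`stirling_typeProb`) gives
`√N ^ d * typeProb → (2π) ^ (-d/2) * ∏ k, (M j k) ^ (-1/2)`, the Taylor expansion (`taylor_two`)
gives `N * (G - max G) → -(y ⬝ H y) / 2`, and dominated convergence together with the Gaussian
integral (`integral_gaussian_quadForm`) yields the limit `w j` (`tendsto_near_sum`). Summing over `j`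
gives the claim.
-/

open Filter Real MeasureTheory

/-! ### Multinomial coefficients -/

/-- The number of configurations with prescribed occupation numbers `m` is the multinomial
coefficient. -/
lemma card_fiber_counts {q N : ℕ} (m : Fin q → ℕ) (hm : ∑ k, m k = N) :
    (Finset.univ.filter fun σ : Fin N → Fin q =>
      ∀ k, (Finset.univ.filter fun i => σ i = k).card = m k).card
      = Nat.multinomial Finset.univ m := by
  classical
  -- compare the coefficients of `X ^ m` in two expansions of `(∑ X_k) ^ N`
  have h1 : (∑ k : Fin q, (MvPolynomial.X k : MvPolynomial (Fin q) ℕ)) ^ N =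
      ∑ σ : Fin N → Fin q, MvPolynomial.monomial
        (Finsupp.equivFunOnFinite.symm fun k => (Finset.univ.filter fun i => σ i = k).card) 1 := by
    have := Finset.prod_univ_sum (R := MvPolynomial (Fin q) ℕ) (ι := Fin N) (fun _ => (Finset.univ : Finset (Fin q)))
      (fun _ k => MvPolynomial.X k)
    simp only [Finset.prod_const, Finset.card_univ, Fintype.card_fin, Fintype.piFinset_univ] at this
    rw [this]
    refine Finset.sum_congr rfl fun σ _ => ?_
    rw [MvPolynomial.monomial_eq, Finsupp.prod_fintype _ _ (by simp)]
    simp only [map_one, one_mul, Finsupp.equivFunOnFinite_symm_apply_apply]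
    rw [← Finset.prod_fiberwise_of_maps_to (g := σ) (t := Finset.univ) (by simp)]
    refine Finset.prod_congr rfl fun k _ => ?_
    rw [Finset.prod_congr rfl (g := fun _ => MvPolynomial.X k) (by simp +contextual)]
    simp
  have h2 : (∑ k : Fin q, (MvPolynomial.X k : MvPolynomial (Fin q) ℕ)) ^ N =
      ∑ m ∈ Finset.piAntidiag Finset.univ N, MvPolynomial.monomial
        (Finsupp.equivFunOnFinite.symm m) (Nat.multinomial Finset.univ m) := by
    rw [Finset.sum_pow_eq_sum_piAntidiag]
    refine Finset.sum_congr rfl fun m _ => ?_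
    rw [MvPolynomial.monomial_eq, Finsupp.prod_fintype _ _ (by simp)]
    simp
  have h3 := congrArg (MvPolynomial.coeff (Finsupp.equivFunOnFinite.symm m)) (h1.symm.trans h2)
  simp only [MvPolynomial.coeff_sum, MvPolynomial.coeff_monomial,
    EmbeddingLike.apply_eq_iff_eq] at h3
  rw [Finset.sum_ite_eq' , if_pos (by simp [hm])] at h3
  rw [← h3, Finset.card_filter]
  simp [funext_iff]

/-- The bound `multinomial m ≤ exp (N * ent (m / N))`, in the form that a multinomial probability
is at most one: the left-hand side is one term in the expansion of `(∑ k, m k / N) ^ N = 1`. -/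
lemma multinomial_mul_prod_le_one {q N : ℕ} (hN : 0 < N) (m : Fin q → ℕ) (hm : ∑ k, m k = N) :
    (Nat.multinomial Finset.univ m : ℝ) * ∏ k, ((m k : ℝ) / N) ^ m k ≤ 1 := by
  classical
  have h := Finset.sum_pow_eq_sum_piAntidiag (Finset.univ : Finset (Fin q)) (fun k => (m k : ℝ) / N) N
  have hs : ∑ k, (m k : ℝ) / N = 1 := by
    rw [← Finset.sum_div, ← Nat.cast_sum, hm]; field_simp
  rw [hs, one_pow] at h
  rw [h]
  exact Finset.single_le_sum (f := fun m' => (Nat.multinomial Finset.univ m' : ℝ) * ∏ k, ((m k : ℝ) / N) ^ m' k)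
    (fun _ _ => by positivity) (by simp [hm])

lemma factorial_eq_stirlingSeq {n : ℕ} (hn : 0 < n) :
    (n.factorial : ℝ) = Stirling.stirlingSeq n * (√2 * √n) * ((n : ℝ) / exp 1) ^ n := by
  unfold Stirling.stirlingSeq
  rw [Real.sqrt_mul (by norm_num)]
  have : (0:ℝ) < n := by exact_mod_cast hn
  field_simp

/-- Stirling's formula for multinomial coefficients as an exact identity: all exponential factors
cancel, and the error is carried by `stirlingSeq`, which tends to `√π`. -/
lemma stirling_multinomial {d N : ℕ} (m : Fin (d + 1) → ℕ) (hm : ∑ k, m k = N)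
    (hpos : ∀ k, 0 < m k) :
    √N ^ d * ((Nat.multinomial Finset.univ m : ℝ) * ∏ k, ((m k : ℝ) / N) ^ m k)
      = Stirling.stirlingSeq N / (√2 ^ d * ∏ k, Stirling.stirlingSeq (m k))
        * (∏ k, √((m k : ℝ) / N))⁻¹ := by
  have hN : 0 < N := hm ▸ (hpos 0).trans_le (Finset.single_le_sum (by simp) (Finset.mem_univ _))
  have hNr : (0:ℝ) < N := by exact_mod_cast hN
  have hmr : ∀ k, (0:ℝ) < m k := fun k => by exact_mod_cast hpos k
  have hs : ∀ n : ℕ, 0 < n → 0 < Stirling.stirlingSeq n := by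
    intro n hn
    obtain ⟨n, rfl⟩ := Nat.exists_eq_succ_of_ne_zero hn.ne'
    exact Stirling.stirlingSeq'_pos n
  have h := congrArg (Nat.cast (R := ℝ)) (Nat.multinomial_spec Finset.univ m)
  rw [hm] at h
  push_cast at h
  rw [factorial_eq_stirlingSeq hN, Finset.prod_congr rfl
    (fun k _ => factorial_eq_stirlingSeq (hpos k))] at h
  simp only [Finset.prod_mul_distrib, div_pow, Finset.prod_div_distrib, Finset.prod_const,
    Finset.card_univ, Fintype.card_fin, Finset.prod_pow_eq_pow_sum, hm,
    Real.sqrt_div (hmr _).le] at h ⊢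
  have p1 : 0 < ∏ k, Stirling.stirlingSeq (m k) := Finset.prod_pos fun k _ => hs _ (hpos k)
  have p2 : 0 < ∏ k, √(m k : ℝ) := Finset.prod_pos fun k _ => Real.sqrt_pos.2 (hmr k)
  have p3 : 0 < ∏ k, (m k : ℝ) ^ m k := Finset.prod_pos fun k _ => pow_pos (hmr k) _
  have p4 : 0 < √(N:ℝ) := Real.sqrt_pos.2 hNr
  have p5 : 0 < √(2:ℝ) := by positivity
  rw [pow_succ] at h ⊢
  have p6 : 0 < √(2:ℝ) ^ d := by positivity
  have p7 : 0 < exp 1 ^ N := by positivity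
  have p8 : 0 < (N:ℝ) ^ N := by positivity
  field_simp at h ⊢
  linear_combination h

/-! ### Gaussian integrals and step functions -/

open scoped Matrix MatrixOrder in
/-- A positive definite quadratic form is a sum of squares of invertible linear coordinates. -/
lemma exists_sq_factor {d : ℕ} {H : Matrix (Fin d) (Fin d) ℝ} (hH : H.PosDef) :
    ∃ B : Matrix (Fin d) (Fin d) ℝ, B.det ^ 2 = H.det ∧ B.det ≠ 0 ∧
      ∀ y, y ⬝ᵥ H *ᵥ y = ∑ i, (B *ᵥ y) i ^ 2 := by
  obtain ⟨B, hB⟩ := CStarAlgebra.nonneg_iff_eq_star_mul_self.mp hH.posSemidef.nonneg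
  have hdet : B.det ^ 2 = H.det := by
    rw [hB, Matrix.det_mul, Matrix.star_eq_conjTranspose, Matrix.det_conjTranspose]
    simp [sq]
  refine ⟨B, hdet, fun h0 => ?_, fun y => ?_⟩
  · have := hH.det_pos
    rw [← hdet, h0] at this
    simp at this
  · rw [hB, ← Matrix.mulVec_mulVec, Matrix.dotProduct_mulVec, Matrix.star_eq_conjTranspose,
      Matrix.vecMul_conjTranspose]
    simp [dotProduct, sq]

open scoped Matrix in
lemma posDef_coercive {d : ℕ} {H : Matrix (Fin d) (Fin d) ℝ} (hH : H.PosDef) :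
    ∃ c > 0, ∀ y : Fin d → ℝ, c * ‖y‖ ^ 2 ≤ y ⬝ᵥ H *ᵥ y := by
  obtain ⟨B, -, hB, hq⟩ := exists_sq_factor hH
  have hu : IsUnit B.det := isUnit_iff_ne_zero.2 hB
  set T := LinearMap.toContinuousLinearMap (Matrix.toLin' B⁻¹)
  have hT : ∀ y, ‖y‖ ≤ (‖T‖ + 1) * ‖B *ᵥ y‖ := by
    intro y
    have h := T.le_opNorm (B *ᵥ y)
    have h2 : T (B *ᵥ y) = y := by
      simp [T, Matrix.mulVec_mulVec, Matrix.nonsing_inv_mul _ hu]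
    rw [h2] at h
    nlinarith [norm_nonneg (B *ᵥ y)]
  have hs : ∀ z : Fin d → ℝ, ‖z‖ ^ 2 ≤ ∑ i, z i ^ 2 := by
    intro z
    have : ‖z‖ ≤ √(∑ i, z i ^ 2) := by
      refine (pi_norm_le_iff_of_nonneg (Real.sqrt_nonneg _)).2 fun i => ?_
      refine Real.le_sqrt_of_sq_le ?_
      rw [Real.norm_eq_abs, sq_abs]
      exact Finset.single_le_sum (f := fun i => z i ^ 2) (fun _ _ => sq_nonneg _)
        (Finset.mem_univ i)
    calc ‖z‖ ^ 2 ≤ √(∑ i, z i ^ 2) ^ 2 := by gcongr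
      _ = _ := Real.sq_sqrt (by positivity)
  have hK : 0 < ‖T‖ + 1 := by positivity
  refine ⟨((‖T‖ + 1) ^ 2)⁻¹, by positivity, fun y => ?_⟩
  rw [hq, inv_mul_le_iff₀ (by positivity)]
  calc ‖y‖ ^ 2 ≤ ((‖T‖ + 1) * ‖B *ᵥ y‖) ^ 2 := by gcongr; exact hT y
    _ = (‖T‖ + 1) ^ 2 * ‖B *ᵥ y‖ ^ 2 := by ring
    _ ≤ _ := by gcongr; exact hs _

open scoped Matrix in
lemma integral_gaussian_quadForm {d : ℕ} {H : Matrix (Fin d) (Fin d) ℝ} (hH : H.PosDef) :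
    ∫ y : Fin d → ℝ, exp (-(y ⬝ᵥ H *ᵥ y) / 2) = √(2 * π) ^ d / √H.det := by
  obtain ⟨B, hdet, hB, hq⟩ := exists_sq_factor hH
  set g : (Fin d → ℝ) → ℝ := fun z => ∏ i, exp (-(1/2) * z i ^ 2)
  have hg : ∫ z, g z = √(2 * π) ^ d := by
    simp only [g]
    rw [integral_fintype_prod_volume_eq_pow (fun t : ℝ => exp (-(1/2) * t ^ 2)),
      integral_gaussian]
    simp [mul_comm]
  have h1 : ∫ y : Fin d → ℝ, exp (-(y ⬝ᵥ H *ᵥ y) / 2) = ∫ y, g (Matrix.toLin' B y) := by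
    congr 1
    ext y
    simp only [g, hq, ← Real.exp_sum, Matrix.toLin'_apply, ← Finset.mul_sum]
    congr 1
    ring
  have hme : MeasurableEmbedding (Matrix.toLin' B) := by
    refine Continuous.measurableEmbedding (LinearMap.continuous_of_finiteDimensional _) ?_
    exact Matrix.mulVec_injective_iff_isUnit.2
      ((Matrix.isUnit_iff_isUnit_det B).2 (isUnit_iff_ne_zero.2 hB))
  rw [h1, ← hme.integral_map, Real.map_matrix_volume_pi_eq_smul_volume_pi hB,
    integral_smul_measure, hg, ← hdet, Real.sqrt_sq_eq_abs, ENNReal.toReal_ofReal (abs_nonneg _),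
    abs_inv, smul_eq_mul]
  field_simp

/-- Here `‖y‖` is the sup norm; the bound `∑ y i ^ 2 ≤ d * ‖y‖ ^ 2` reduces the claim to a product
of one-dimensional Gaussians. -/
lemma integrable_exp_neg_norm_sq {d : ℕ} {c : ℝ} (hc : 0 < c) :
    Integrable (fun y : Fin d → ℝ => exp (-c * ‖y‖ ^ 2)) := by
  have h1 : Integrable (fun y : Fin d → ℝ => ∏ i, exp (-(c / (d + 1)) * y i ^ 2)) :=
    Integrable.fintype_prod (f := fun _ t => exp (-(c / (d + 1)) * t ^ 2))
      fun _ => integrable_exp_neg_mul_sq (by positivity)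
  refine h1.mono' (by fun_prop) (Eventually.of_forall fun y => ?_)
  rw [Real.norm_eq_abs, abs_of_pos (exp_pos _), ← Real.exp_sum, ← Finset.mul_sum]
  refine Real.exp_le_exp.2 ?_
  have : ∑ i, y i ^ 2 ≤ d * ‖y‖ ^ 2 := by
    have := Finset.sum_le_card_nsmul Finset.univ (fun i => y i ^ 2) (‖y‖ ^ 2) (fun i _ => by
      rw [← sq_abs]; gcongr; exact norm_le_pi_norm y i)
    simpa using this
  have h2 : c / (d + 1) * ∑ i, y i ^ 2 ≤ c * ‖y‖ ^ 2 := by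
    rw [div_mul_eq_mul_div, div_le_iff₀ (by positivity)]
    nlinarith [mul_nonneg hc.le (sq_nonneg ‖y‖), mul_le_mul_of_nonneg_left this hc.le]
  linarith

/-- A finite lattice sum is the integral of the step function constant on unit cubes. -/
lemma sum_eq_integral_floor {d : ℕ} (S : Finset (Fin d → ℤ)) (f : (Fin d → ℤ) → ℝ) :
    ∑ u ∈ S, f u = ∫ y : Fin d → ℝ, (if (fun k => ⌊y k⌋) ∈ S then f (fun k => ⌊y k⌋) else 0) := by
  have hm : ∀ u : Fin d → ℤ, (fun y : Fin d → ℝ => if (fun k => ⌊y k⌋) = u then f u else 0)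
      = Set.indicator (Set.univ.pi fun k => Set.Ico (u k : ℝ) (u k + 1)) fun _ => f u := by
    intro u
    ext y
    classical
    rw [Set.indicator_apply]
    refine if_congr ?_ rfl rfl
    simp only [Set.mem_pi, Set.mem_univ, true_imp_iff, Set.mem_Ico, funext_iff, Int.floor_eq_iff]
  have hms : ∀ u : Fin d → ℤ, MeasurableSet (Set.univ.pi fun k => Set.Ico (u k : ℝ) (u k + 1)) :=
    fun u => MeasurableSet.univ_pi fun k => measurableSet_Ico
  have hv : ∀ u : Fin d → ℤ, volume (Set.univ.pi fun k => Set.Ico (u k : ℝ) (u k + 1)) = 1 := by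
    intro u
    rw [Real.volume_pi_Ico]
    simp
  have h1 : (fun y : Fin d → ℝ => if (fun k => ⌊y k⌋) ∈ S then f (fun k => ⌊y k⌋) else 0)
      = fun y => ∑ u ∈ S, if (fun k => ⌊y k⌋) = u then f u else 0 := by
    ext y
    rw [Finset.sum_ite_eq]
  rw [h1, integral_finsetSum]
  · refine Finset.sum_congr rfl fun u _ => ?_
    rw [hm, integral_indicator (hms u)]
    simp [Measure.real, hv]
  · intro u _
    rw [hm, integrable_indicator_iff (hms u)]
    refine integrableOn_const ?_ 
    simp [hv]

lemma integral_rescale {d : ℕ} (f : (Fin d → ℝ) → ℝ) (v : Fin d → ℝ) {r : ℝ} (hr : 0 < r) :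
    ∫ y, f y = r ^ d * ∫ y, f (v + r • y) := by
  rw [Measure.integral_comp_smul volume (fun z => f (v + z)) r, integral_add_left_eq_self f v]
  simp only [Module.finrank_fintype_fun_eq_card, Fintype.card_fin, smul_eq_mul]
  rw [abs_of_pos (by positivity)]
  field_simp

/-! ### Taylor expansion at a critical point -/

open scoped Matrix Topology in
/-- Second-order Taylor expansion at a critical point. The remainder has derivative
`DG x - DG M - D²G(M) (x - M) = o(‖x - M‖)`, so the mean value inequality on the ball of radius
`‖x - M‖` makes it `o(‖x - M‖ ^ 2)`. -/
lemma taylor_two {d : ℕ} {G : (Fin d → ℝ) → ℝ} {M : Fin d → ℝ} {H : Matrix (Fin d) (Fin d) ℝ}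
    (hG : ContDiffAt ℝ 2 G M) (hG0 : fderiv ℝ G M = 0) (hsymm : H.IsHermitian)
    (hH : ∀ k l, H k l =
      -(fderiv ℝ (fun x => fderiv ℝ G x (Pi.single l 1)) M) (Pi.single k 1)) :
    (fun x => G x - G M + ((x - M) ⬝ᵥ H *ᵥ (x - M)) / 2) =o[𝓝 M] fun x => ‖x - M‖ ^ 2 := by
  have hD : DifferentiableAt ℝ (fderiv ℝ G) M :=
    (hG.fderiv_right (m := 1) (by norm_num)).differentiableAt (by norm_num)
  set D := fderiv ℝ (fderiv ℝ G) M with hDdef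
  have hDH : ∀ k l, D (Pi.single k 1) (Pi.single l 1) = - H k l := by
    intro k l
    rw [hH, fderiv_clm_apply hD (by fun_prop)]
    simp [D]
  have hDq : ∀ v h : Fin d → ℝ, D v h = -(v ⬝ᵥ H *ᵥ h) := by
    intro v h
    conv_lhs => rw [pi_eq_sum_univ' v, pi_eq_sum_univ' h]
    simp only [map_sum, map_smul, sum_apply, smul_apply]
    simp only [hDH, dotProduct, Matrix.mulVec, smul_eq_mul, Finset.mul_sum]
    rw [Finset.sum_comm]
    simp only [← Finset.sum_neg_distrib]
    refine Finset.sum_congr rfl fun k _ => Finset.sum_congr rfl fun l _ => ?_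
    ring
  have hDs : ∀ v h, D v h = D h v := by
    intro v h
    have hT : Hᵀ = H := by
      have : H.IsSymm := by simpa using hsymm
      exact this
    rw [hDq, hDq, Matrix.dotProduct_mulVec, ← Matrix.mulVec_transpose, hT, dotProduct_comm]
  have hev : ∀ᶠ x in 𝓝 M, DifferentiableAt ℝ G x :=
    (hG.eventually (by simp)).mono fun x hx => hx.differentiableAt (by norm_num)
  rw [Asymptotics.isLittleO_iff]
  intro ε hε
  have hlit := hD.hasFDerivAt.isLittleO.def hε
  obtain ⟨r, hr, hball⟩ := Metric.eventually_nhds_iff_ball.1 (hev.and hlit)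
  filter_upwards [Metric.ball_mem_nhds M hr] with x hx
  set s := Metric.closedBall M ‖x - M‖
  have hs : s ⊆ Metric.ball M r := by
    apply Metric.closedBall_subset_ball
    simpa [dist_eq_norm] using hx
  have hder : ∀ z ∈ s, HasFDerivWithinAt
      (fun x => G x - G M + ((x - M) ⬝ᵥ H *ᵥ (x - M)) / 2)
      (fderiv ℝ G z - D (z - M)) s z := by
    intro z hz
    have h1 := (hball z (hs hz)).1.hasFDerivAt
    have hid : HasFDerivAt (fun x : Fin d → ℝ => x - M) (ContinuousLinearMap.id ℝ _) z :=
      (hasFDerivAt_id z).sub_const M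
    have h2 : HasFDerivAt (fun x => D (x - M)) D z := by
      have := D.hasFDerivAt.comp z hid
      rw [ContinuousLinearMap.comp_id] at this
      exact this
    have h3 := h2.clm_apply hid
    have h4 := (h1.sub_const (G M)).sub (h3.const_mul (1/2 : ℝ))
    have h5 : (fun x => G x - G M + ((x - M) ⬝ᵥ H *ᵥ (x - M)) / 2)
        = (fun x => G x - G M) - fun y => 1 / 2 * (D (y - M)) (y - M) := by
      ext x
      simp only [hDq, Pi.sub_apply]
      ring
    rw [h5]
    refine (h4.congr_fderiv ?_).hasFDerivWithinAt
    ext v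
    simp only [ContinuousLinearMap.comp_id, sub_apply, smul_apply, add_apply,
      ContinuousLinearMap.flip_apply, hDs v (z - M), smul_eq_mul]
    ring
  have hb : ∀ z ∈ s, ‖fderiv ℝ G z - D (z - M)‖ ≤ ε * ‖x - M‖ := by
    intro z hz
    have := (hball z (hs hz)).2
    rw [hG0, sub_zero] at this
    refine this.trans ?_
    gcongr
    simpa [s, dist_eq_norm] using hz
  have := (convex_closedBall M ‖x - M‖).norm_image_sub_le_of_norm_hasFDerivWithin_le hder hb
    (x := M) (y := x) (Metric.mem_closedBall_self (norm_nonneg _))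
    (by rw [Metric.mem_closedBall, dist_eq_norm])
  simp only [sub_self, zero_dotProduct, zero_div, add_zero, sub_zero] at this
  rw [norm_pow, norm_norm]
  calc _ ≤ _ := this
    _ = _ := by ring

/-! ### The lattice simplex -/

/-- The inverse of the chart of the simplex that forgets the last coordinate: `x` is completed by
`1 - ∑ k, x k`. -/
noncomputable def simplexLift {d : ℕ} (x : Fin d → ℝ) : Fin (d + 1) → ℝ :=
  Fin.snoc x (1 - ∑ k, x k)

/-- The possible values of the first `d` occupation numbers of a configuration of size `N`, taken
in `ℤ` so that they can be compared with integer parts. -/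
noncomputable def latticeSimplex (d N : ℕ) : Finset (Fin d → ℤ) :=
  (Fintype.piFinset fun _ => Finset.Icc (0 : ℤ) N).filter fun u => ∑ k, u k ≤ N

/-- All `d + 1` occupation numbers, recovered from the first `d`. Meaningful on `latticeSimplex d N`;
negative entries are truncated to `0` elsewhere. -/
def occupation {d : ℕ} (N : ℕ) (u : Fin d → ℤ) : Fin (d + 1) → ℕ :=
  Fin.snoc (fun k => (u k).toNat) ((N : ℤ) - ∑ k, u k).toNat

/-- The magnetization (in the chart) of the occupation vector `u`. -/
noncomputable def latticePoint {d : ℕ} (N : ℕ) (u : Fin d → ℤ) : Fin d → ℝ :=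
  fun k => (u k : ℝ) / N

/-- The probability that `N` independent draws from the law `occupation N u / N` have occupation
numbers exactly `occupation N u`. -/
noncomputable def typeProb {d : ℕ} (N : ℕ) (u : Fin d → ℤ) : ℝ :=
  (Nat.multinomial Finset.univ (occupation N u) : ℝ) *
    ∏ k, ((occupation N u k : ℝ) / N) ^ occupation N u k

lemma mem_latticeSimplex {d N : ℕ} {u : Fin d → ℤ} :
    u ∈ latticeSimplex d N ↔ (∀ k, 0 ≤ u k) ∧ ∑ k, u k ≤ N := by
  simp only [latticeSimplex, Finset.mem_filter, Fintype.mem_piFinset, Finset.mem_Icc]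
  constructor
  · rintro ⟨h1, h2⟩
    exact ⟨fun k => (h1 k).1, h2⟩
  · rintro ⟨h1, h2⟩
    refine ⟨fun k => ⟨h1 k, le_trans ?_ h2⟩, h2⟩
    exact Finset.single_le_sum (f := u) (fun k _ => h1 k) (Finset.mem_univ k)

lemma card_latticeSimplex_le (d N : ℕ) : (latticeSimplex d N).card ≤ (N + 1) ^ d := by
  refine (Finset.card_filter_le _ _).trans ?_
  simp [Fintype.card_piFinset]

lemma sum_occupation {d N : ℕ} {u : Fin d → ℤ} (hu : u ∈ latticeSimplex d N) :
    ∑ k, occupation N u k = N := by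
  obtain ⟨h1, h2⟩ := mem_latticeSimplex.1 hu
  rw [Fin.sum_univ_castSucc]
  simp only [occupation, Fin.snoc_castSucc, Fin.snoc_last]
  zify
  rw [Int.toNat_of_nonneg (by linarith), Finset.sum_congr rfl
    (fun k _ => Int.toNat_of_nonneg (h1 k))]
  ring

lemma occupation_div {d N : ℕ} (hN : 0 < N) {u : Fin d → ℤ} (hu : u ∈ latticeSimplex d N)
    (k : Fin (d + 1)) : (occupation N u k : ℝ) / N = simplexLift (latticePoint N u) k := by
  obtain ⟨h1, h2⟩ := mem_latticeSimplex.1 hu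
  have hNr : (0:ℝ) < N := by exact_mod_cast hN
  have cast_toNat : ∀ z : ℤ, 0 ≤ z → ((z.toNat : ℕ) : ℝ) = z := fun z hz => by
    exact_mod_cast congrArg (Int.cast (R := ℝ)) (Int.toNat_of_nonneg hz)
  refine Fin.lastCases ?_ (fun k => ?_) k
  · simp only [occupation, simplexLift, latticePoint, Fin.snoc_last]
    rw [cast_toNat _ (by linarith), ← Finset.sum_div]
    push_cast
    field_simp
  · simp only [occupation, simplexLift, latticePoint, Fin.snoc_castSucc]
    rw [cast_toNat _ (h1 k)]

lemma mem_latticeSimplex_of_pos {d N : ℕ} (hN : 0 < N) {u : Fin d → ℤ}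
    (hu : ∀ k, 0 < simplexLift (latticePoint N u) k) : u ∈ latticeSimplex d N := by
  have hNr : (0:ℝ) < N := by exact_mod_cast hN
  rw [mem_latticeSimplex]
  constructor
  · intro k
    have := hu k.castSucc
    simp only [simplexLift, latticePoint, Fin.snoc_castSucc] at this
    have := (div_pos_iff_of_pos_right hNr).1 this
    exact_mod_cast this.le
  · have := hu (Fin.last d)
    simp only [simplexLift, latticePoint, Fin.snoc_last] at this
    rw [← Finset.sum_div, sub_pos, div_lt_one hNr] at this
    exact_mod_cast this.le

lemma typeProb_nonneg {d : ℕ} (N : ℕ) (u : Fin d → ℤ) : 0 ≤ typeProb N u := by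
  unfold typeProb; positivity

lemma typeProb_le_one {d N : ℕ} (hN : 0 < N) {u : Fin d → ℤ} (hu : u ∈ latticeSimplex d N) :
    typeProb N u ≤ 1 :=
  multinomial_mul_prod_le_one hN _ (sum_occupation hu)

lemma stirling_typeProb {d N : ℕ} (hN : 0 < N) {u : Fin d → ℤ}
    (hu : ∀ k, 0 < simplexLift (latticePoint N u) k) :
    √N ^ d * typeProb N u
      = Stirling.stirlingSeq N / (√2 ^ d * ∏ k, Stirling.stirlingSeq (occupation N u k))
        * (∏ k, √(simplexLift (latticePoint N u) k))⁻¹ := by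
  have hmem := mem_latticeSimplex_of_pos hN hu
  have hNr : (0:ℝ) < N := by exact_mod_cast hN
  rw [typeProb, stirling_multinomial _ (sum_occupation hmem)]
  · simp only [occupation_div hN hmem]
  · intro k
    have := hu k
    rw [← occupation_div hN hmem, div_pos_iff_of_pos_right hNr] at this
    exact_mod_cast this

lemma continuous_simplexLift {d : ℕ} : Continuous (simplexLift (d := d)) := by
  refine continuous_pi fun k => ?_
  refine Fin.lastCases ?_ (fun k => ?_) k
  · simp only [simplexLift, Fin.snoc_last]; fun_prop
  · simp only [simplexLift, Fin.snoc_castSucc]; fun_prop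

/-! ### Rounding to the lattice on the scale `√N` -/

/-- The coordinatewise integer part of `N M + √N y`. -/
noncomputable def roundPt {d : ℕ} (M : Fin d → ℝ) (N : ℕ) (y : Fin d → ℝ) : Fin d → ℤ :=
  fun k => ⌊((N : ℝ) • M + √N • y) k⌋

lemma norm_rescaled_sub_le {d N : ℕ} (hN : 0 < N) (M y : Fin d → ℝ) :
    ‖√N • (latticePoint N (roundPt M N y) - M) - y‖ ≤ 1 / √N := by
  have hNr : (0:ℝ) < N := by exact_mod_cast hN
  have hs : 0 < √(N:ℝ) := Real.sqrt_pos.2 hNr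
  have hss : √(N:ℝ) * √N = N := Real.mul_self_sqrt hNr.le
  refine (pi_norm_le_iff_of_nonneg (by positivity)).2 fun k => ?_
  simp only [latticePoint, roundPt, Pi.sub_apply, Pi.smul_apply, Pi.add_apply, smul_eq_mul]
  set t := (N:ℝ) * M k + √N * y k with ht
  have h1 := Int.floor_le t
  have h2 := Int.lt_floor_add_one t
  have : √(N:ℝ) * ((⌊t⌋:ℝ) / N - M k) - y k = (⌊t⌋ - t) / √N := by
    generalize (⌊t⌋ : ℝ) = f
    rw [ht]
    generalize √(N:ℝ) = s at hs hss
    rw [← hss]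
    field_simp
    ring
  rw [this, norm_div, Real.norm_eq_abs, Real.norm_eq_abs, abs_of_pos hs]
  gcongr
  rw [abs_le]
  constructor <;> linarith

open scoped Topology in
lemma tendsto_rescaled {d : ℕ} (M y : Fin d → ℝ) :
    Tendsto (fun N : ℕ => √(N:ℝ) • (latticePoint N (roundPt M N y) - M)) atTop (𝓝 y) := by
  have h0 : Tendsto (fun N : ℕ => 1 / √(N:ℝ)) atTop (𝓝 0) := by
    simp only [one_div]
    exact (Real.tendsto_sqrt_atTop.comp tendsto_natCast_atTop_atTop).inv_tendsto_atTop
  rw [tendsto_iff_norm_sub_tendsto_zero]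
  refine squeeze_zero' (Eventually.of_forall fun _ => norm_nonneg _) ?_ h0
  filter_upwards [eventually_gt_atTop 0] with N hN using norm_rescaled_sub_le hN M y

open scoped Topology in
lemma tendsto_latticePoint {d : ℕ} (M y : Fin d → ℝ) :
    Tendsto (fun N : ℕ => latticePoint N (roundPt M N y)) atTop (𝓝 M) := by
  have h0 : Tendsto (fun N : ℕ => (√(N:ℝ))⁻¹) atTop (𝓝 0) :=
    (Real.tendsto_sqrt_atTop.comp tendsto_natCast_atTop_atTop).inv_tendsto_atTop
  have h := (h0.smul (tendsto_rescaled M y)).const_add M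
  rw [zero_smul, add_zero] at h
  refine h.congr' ?_
  filter_upwards [eventually_gt_atTop 0] with N hN
  have hs : √(N:ℝ) ≠ 0 := (Real.sqrt_pos.2 (by exact_mod_cast hN)).ne'
  rw [smul_smul, inv_mul_cancel₀ hs, one_smul]
  abel

/-! ### Laplace's method at one maximizer -/

open scoped Matrix Topology in
/-- Laplace's method near one maximizer `M`. The lattice sum over the ball of radius `δ` equals
the integral over `y` of `√N ^ d` times the summand at the lattice point `⌊N M + √N y⌋`. By Stirling
and the Taylor expansion the integrand converges pointwise to a Gaussian density, and by the
quadratic bound `h2` it is dominated by a multiple of `exp (-(lam / 2) * ‖y‖ ^ 2)`. -/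
lemma tendsto_near_sum {d : ℕ} {G : (Fin d → ℝ) → ℝ} {M : Fin d → ℝ}
    {H : Matrix (Fin d) (Fin d) ℝ} (hH : H.PosDef) {δ c lam : ℝ} (hδ : 0 < δ) (hc : 0 < c)
    (hlam : 0 < lam)
    (h1 : ∀ x, ‖x - M‖ ≤ δ → ∀ k, c ≤ simplexLift x k)
    (h2 : ∀ x, ‖x - M‖ ≤ δ → G x - G M ≤ -lam * ‖x - M‖ ^ 2)
    (h3 : (fun x => G x - G M + ((x - M) ⬝ᵥ H *ᵥ (x - M)) / 2) =o[𝓝 M] fun x => ‖x - M‖ ^ 2) :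
    Tendsto (fun N : ℕ => ∑ u ∈ latticeSimplex d N with ‖latticePoint N u - M‖ ≤ δ,
      typeProb N u * exp (N * (G (latticePoint N u) - G M))) atTop
      (𝓝 (√(H.det * ∏ k, simplexLift M k))⁻¹) := by
  classical
  set S : ℕ → Finset (Fin d → ℤ) := fun N =>
    (latticeSimplex d N).filter fun u => ‖latticePoint N u - M‖ ≤ δ with hS
  set g : ℕ → (Fin d → ℤ) → ℝ := fun N u => if u ∈ S N then
    √(N:ℝ) ^ d * typeProb N u * exp (N * (G (latticePoint N u) - G M)) else 0 with hg
  have hmem : ∀ N : ℕ, 0 < N → ∀ u : Fin d → ℤ, ‖latticePoint N u - M‖ ≤ δ → u ∈ S N := by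
    intro N hN u hu
    rw [hS, Finset.mem_filter]
    exact ⟨mem_latticeSimplex_of_pos hN fun k => hc.trans_le (h1 _ hu k), hu⟩
  have hsum : ∀ N : ℕ, 0 < N → ∫ y, g N (roundPt M N y) =
      ∑ u ∈ S N, typeProb N u * exp (N * (G (latticePoint N u) - G M)) := by
    intro N hN
    have hs : 0 < √(N:ℝ) := Real.sqrt_pos.2 (by exact_mod_cast hN)
    conv_rhs => rw [sum_eq_integral_floor, integral_rescale _ ((N:ℝ) • M) hs, ← integral_const_mul]
    congr 1
    ext y
    simp only [hg, mul_ite, mul_zero]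
    exact if_congr Iff.rfl (mul_assoc _ _ _) rfl
  set A : ℝ := (√(2 * π) ^ d)⁻¹ * (∏ k, √(simplexLift M k))⁻¹ with hA
  have hMpos : ∀ k, 0 < simplexLift M k := fun k => hc.trans_le (h1 M (by simpa using hδ.le) k)
  have hlim : ∫ y : Fin d → ℝ, A * exp (-(y ⬝ᵥ H *ᵥ y) / 2)
      = (√(H.det * ∏ k, simplexLift M k))⁻¹ := by
    rw [integral_const_mul, integral_gaussian_quadForm hH, Real.sqrt_mul hH.det_pos.le,
      Real.sqrt_prod _ (fun k _ => (hMpos k).le), hA]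
    have : (√(2 * π) ^ d) ≠ 0 := by positivity
    field_simp
  rw [← hlim]
  suffices h : Tendsto (fun N : ℕ => ∫ y, g N (roundPt M N y)) atTop
      (𝓝 (∫ y : Fin d → ℝ, A * exp (-(y ⬝ᵥ H *ᵥ y) / 2))) by
    refine h.congr' ?_
    filter_upwards [eventually_gt_atTop 0] with N hN using hsum N hN
  -- The constant `C` bounds the Stirling prefactor, since `stirlingSeq` is at most `K` and at least
  -- `√π` at positive integers, and the coordinates of the lifted point are at least `c`.
  obtain ⟨K, hK⟩ : ∃ K, ∀ n, Stirling.stirlingSeq n ≤ K := by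
    obtain ⟨K, hK⟩ := Stirling.tendsto_stirlingSeq_sqrt_pi.bddAbove_range
    exact ⟨K, fun n => hK ⟨n, rfl⟩⟩
  have hK0 : 0 ≤ K := by simpa using hK 0
  set C : ℝ := K / (√2 ^ d * ∏ _k : Fin (d + 1), √π) * (∏ _k : Fin (d + 1), √c)⁻¹ with hC
  have hC0 : 0 ≤ C := by positivity
  have hstir : ∀ N : ℕ, 0 < N → ∀ u : Fin d → ℤ, ‖latticePoint N u - M‖ ≤ δ →
      √(N:ℝ) ^ d * typeProb N u ≤ C := by
    intro N hN u hu
    have hp : ∀ k, 0 < simplexLift (latticePoint N u) k := fun k => hc.trans_le (h1 _ hu k)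
    have hu' := mem_latticeSimplex_of_pos hN hp
    rw [stirling_typeProb hN hp, hC]
    have hoc : ∀ k, occupation N u k ≠ 0 := by
      intro k h0
      have := hp k
      rw [← occupation_div hN hu', h0] at this
      simp at this
    have hc' : (0:ℝ) < √c := Real.sqrt_pos.2 hc
    gcongr with k _ k _
    · exact hK N
    · exact Stirling.sqrt_pi_le_stirlingSeq (hoc k)
    · exact h1 _ hu k
  refine tendsto_integral_filter_of_dominated_convergence
    (fun y => C * exp lam * exp (-(lam / 2) * ‖y‖ ^ 2)) ?_ ?_
    ((integrable_exp_neg_norm_sq (by positivity)).const_mul _) ?_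
  · refine Eventually.of_forall fun N => Measurable.aestronglyMeasurable ?_
    have hr : Measurable (roundPt M N) := by
      unfold roundPt
      refine measurable_pi_lambda _ fun k => Int.measurable_floor.comp ?_
      exact (measurable_pi_apply k).comp (by fun_prop)
    exact (measurable_of_countable (g N)).comp hr
  · filter_upwards [eventually_gt_atTop 0] with N hN
    refine Eventually.of_forall fun y => ?_
    simp only [hg]
    have hNr : (1:ℝ) ≤ N := by exact_mod_cast hN
    split_ifs with hu
    · have hu2 := (Finset.mem_filter.1 hu).2
      have hsN : (1:ℝ) ≤ √N := by simpa using Real.sqrt_le_sqrt hNr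
      have hn : ‖√(N:ℝ) • (latticePoint N (roundPt M N y) - M) - y‖ ≤ 1 :=
        (norm_rescaled_sub_le hN M y).trans (by rw [div_le_one (by linarith)]; exact hsN)
      rw [Real.norm_eq_abs, abs_of_nonneg
        (mul_nonneg (mul_nonneg (by positivity) (typeProb_nonneg _ _)) (exp_pos _).le), mul_assoc C]
      refine mul_le_mul (hstir N hN _ hu2) ?_ (exp_pos _).le hC0
      rw [← Real.exp_add]
      refine Real.exp_le_exp.2 ?_
      have h4 := h2 _ hu2
      set v := latticePoint N (roundPt M N y) - M with hv
      have h5 : ‖√(N:ℝ) • v‖ = √N * ‖v‖ := by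
        rw [norm_smul, Real.norm_eq_abs, abs_of_nonneg (Real.sqrt_nonneg _)]
      have h6 : ‖y‖ ≤ √N * ‖v‖ + 1 := by
        rw [← h5]
        have := norm_sub_norm_le y (√(N:ℝ) • v)
        rw [norm_sub_rev] at this
        linarith
      have h7 : (√N * ‖v‖) ^ 2 = N * ‖v‖ ^ 2 := by
        rw [mul_pow, Real.sq_sqrt (by linarith)]
      have h8 : ‖y‖ ^ 2 ≤ 2 * (N * ‖v‖ ^ 2) + 2 := by
        rw [← h7]
        nlinarith [norm_nonneg y, sq_nonneg (√N * ‖v‖ - 1)]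
      have h9 := mul_le_mul_of_nonneg_left h4 (by linarith : (0:ℝ) ≤ N)
      nlinarith
    · rw [norm_zero]; positivity
  · refine Eventually.of_forall fun y => ?_
    have hx := tendsto_latticePoint M y
    have hz := tendsto_rescaled M y
    have hnear : ∀ᶠ N : ℕ in atTop, ‖latticePoint N (roundPt M N y) - M‖ ≤ δ := by
      have := (tendsto_iff_norm_sub_tendsto_zero.1 hx).eventually (ge_mem_nhds hδ)
      exact this
    have hlift : ∀ k, Tendsto (fun N : ℕ => simplexLift (latticePoint N (roundPt M N y)) k)
        atTop (𝓝 (simplexLift M k)) := fun k =>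
      (tendsto_pi_nhds.1 ((continuous_simplexLift.tendsto M).comp hx)) k
    have hocc : ∀ k, Tendsto (fun N : ℕ => occupation N (roundPt M N y) k) atTop atTop := by
      intro k
      rw [← tendsto_natCast_atTop_iff (R := ℝ)]
      have : Tendsto (fun N : ℕ => simplexLift (latticePoint N (roundPt M N y)) k * (N:ℝ))
          atTop atTop := (hlift k).pos_mul_atTop (hMpos k) tendsto_natCast_atTop_atTop
      refine this.congr' ?_
      filter_upwards [eventually_gt_atTop 0, hnear] with N hN hn
      rw [← occupation_div hN (Finset.mem_filter.1 (hmem N hN _ hn)).1]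
      have : (N:ℝ) ≠ 0 := by exact_mod_cast hN.ne'
      field_simp
    have hst := Stirling.tendsto_stirlingSeq_sqrt_pi
    have hpre : Tendsto (fun N : ℕ => Stirling.stirlingSeq N /
        (√2 ^ d * ∏ k, Stirling.stirlingSeq (occupation N (roundPt M N y) k))
        * (∏ k, √(simplexLift (latticePoint N (roundPt M N y)) k))⁻¹) atTop (𝓝 A) := by
      have hp : (0:ℝ) < √π := Real.sqrt_pos.2 pi_pos
      have hA' : A = √π / (√2 ^ d * ∏ _k : Fin (d + 1), √π) * (∏ k, √(simplexLift M k))⁻¹ := by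
        rw [hA]
        congr 1
        rw [Real.sqrt_mul (by norm_num), mul_pow]
        simp only [Finset.prod_const, Finset.card_univ, Fintype.card_fin, pow_succ]
        field_simp
      rw [hA']
      refine (hst.div ((tendsto_finsetProd _ fun k _ => hst.comp (hocc k)).const_mul _) ?_).mul
        ((tendsto_finsetProd _ fun k _ => (hlift k).sqrt).inv₀ ?_)
      · positivity
      · exact (Finset.prod_pos fun k _ => Real.sqrt_pos.2 (hMpos k)).ne'
    have hexp : Tendsto (fun N : ℕ => (N:ℝ) * (G (latticePoint N (roundPt M N y)) - G M)) atTop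
        (𝓝 (-(y ⬝ᵥ H *ᵥ y) / 2)) := by
      have hq : Tendsto (fun N : ℕ =>
          -((√(N:ℝ) • (latticePoint N (roundPt M N y) - M)) ⬝ᵥ
            H *ᵥ (√(N:ℝ) • (latticePoint N (roundPt M N y) - M))) / 2) atTop
          (𝓝 (-(y ⬝ᵥ H *ᵥ y) / 2)) := by
        have hcont : Continuous fun z : Fin d → ℝ => -(z ⬝ᵥ H *ᵥ z) / 2 := by fun_prop
        exact (hcont.tendsto y).comp hz
      have hrem : Tendsto (fun N : ℕ => (N:ℝ) * (G (latticePoint N (roundPt M N y)) - G M +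
          ((latticePoint N (roundPt M N y) - M) ⬝ᵥ H *ᵥ (latticePoint N (roundPt M N y) - M)) / 2))
          atTop (𝓝 0) := by
        have ho := (Asymptotics.isBigO_refl (fun N : ℕ => (N:ℝ)) atTop).mul_isLittleO
          (h3.comp_tendsto hx)
        refine ho.trans_isBigO ?_ |>.tendsto_zero_of_tendsto (hz.norm.pow 2)
        refine Asymptotics.IsBigO.of_bound 1 (Eventually.of_forall fun N => ?_)
        rw [norm_smul, mul_pow, Real.norm_eq_abs (√(N:ℝ)), sq_abs, Real.sq_sqrt (by positivity)]
        simp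
      have := hq.add hrem
      rw [add_zero] at this
      refine this.congr fun N => ?_
      simp only [smul_dotProduct, Matrix.mulVec_smul, dotProduct_smul, smul_eq_mul]
      rw [← mul_assoc, Real.mul_self_sqrt (by positivity)]
      ring
    refine (hpre.mul ((Real.continuous_exp.tendsto _).comp hexp)).congr' ?_
    filter_upwards [eventually_gt_atTop 0, hnear] with N hN hn
    simp only [hg]
    rw [if_pos (hmem N hN _ hn), stirling_typeProb hN fun k => hc.trans_le (h1 _ hn k)]
    rfl

/-! ### The partition function as a lattice sum -/

lemma simplexLift_mem {d : ℕ} {x : Fin d → ℝ} :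
    (∀ k, 0 ≤ simplexLift x k) ↔ (∀ k, 0 ≤ x k) ∧ ∑ k, x k ≤ 1 := by
  rw [Fin.forall_fin_succ']
  simp [simplexLift]

lemma sum_simplexLift {d : ℕ} (x : Fin d → ℝ) : ∑ k, simplexLift x k = 1 := by
  rw [Fin.sum_univ_castSucc]
  simp [simplexLift]

lemma contDiff_simplexLift {d : ℕ} {n : WithTop ℕ∞} : ContDiff ℝ n (simplexLift (d := d)) := by
  refine contDiff_pi.2 fun k => ?_
  refine Fin.lastCases ?_ (fun k => ?_) k
  · simp only [simplexLift, Fin.snoc_last]; fun_prop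
  · simp only [simplexLift, Fin.snoc_castSucc]; fun_prop

/-- A sum over configurations of a function of the magnetization, grouped by occupation numbers. -/
lemma sum_config_eq {d N : ℕ} (hN : 0 < N) (f : (Fin (d + 1) → ℝ) → ℝ) :
    ∑ σ : Fin N → Fin (d + 1), f (fun k => ((Finset.univ.filter fun i => σ i = k).card : ℝ) / N)
      = ∑ u ∈ latticeSimplex d N, (Nat.multinomial Finset.univ (occupation N u) : ℝ) *
        f (simplexLift (latticePoint N u)) := by
  classical
  set cnt : (Fin N → Fin (d + 1)) → Fin (d + 1) → ℕ :=
    fun σ k => (Finset.univ.filter fun i => σ i = k).card with hcnt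
  have hsum : ∀ σ, ∑ k, cnt σ k = N := by
    intro σ
    have := Finset.card_eq_sum_card_fiberwise (s := (Finset.univ : Finset (Fin N))) (f := σ)
      (t := Finset.univ) (by simp)
    simpa [hcnt] using this.symm
  set U : (Fin N → Fin (d + 1)) → Fin d → ℤ := fun σ k => cnt σ k.castSucc with hU
  have hlast : ∀ σ, (N : ℤ) - ∑ k, U σ k = cnt σ (Fin.last d) := by
    intro σ
    have := hsum σ
    rw [Fin.sum_univ_castSucc] at this
    simp only [hU]
    rw [← this]
    push_cast
    ring
  have hocc : ∀ σ, occupation N (U σ) = cnt σ := by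
    intro σ
    ext k
    refine Fin.lastCases ?_ (fun k => ?_) k
    · simp only [occupation, Fin.snoc_last, hlast, Int.toNat_natCast]
    · simp only [occupation, Fin.snoc_castSucc, hU, Int.toNat_natCast]
  have hmem : ∀ σ, U σ ∈ latticeSimplex d N := by
    intro σ
    rw [mem_latticeSimplex]
    refine ⟨fun k => by simp [hU], ?_⟩
    have := hlast σ
    have h2 : (0:ℤ) ≤ cnt σ (Fin.last d) := by positivity
    linarith
  rw [← Finset.sum_fiberwise_of_maps_to (g := U) (t := latticeSimplex d N) (fun σ _ => hmem σ)]
  refine Finset.sum_congr rfl fun u hu => ?_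
  rw [Finset.sum_congr rfl (g := fun _ => f (simplexLift (latticePoint N u)))]
  · rw [Finset.sum_const, nsmul_eq_mul, ← card_fiber_counts _ (sum_occupation hu)]
    congr 3
    ext σ
    simp only [Finset.mem_filter, Finset.mem_univ, true_and]
    constructor
    · rintro rfl k
      rw [hocc]
    · intro h
      obtain ⟨h1, -⟩ := mem_latticeSimplex.1 hu
      ext k
      have := h k.castSucc
      simp only [occupation, Fin.snoc_castSucc] at this
      simp only [hU, hcnt, this, Int.toNat_of_nonneg (h1 k)]
  · intro σ hσ
    obtain rfl := (Finset.mem_filter.1 hσ).2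
    congr 1
    ext k
    rw [← occupation_div hN (hmem σ), hocc]

/-- Dividing the multinomial coefficient by `exp (N * ent)` leaves `typeProb`, so the entropy joins
the energy in the exponent. -/
lemma multinomial_mul_exp {d N : ℕ} (hN : 0 < N) {u : Fin d → ℤ} (hu : u ∈ latticeSimplex d N)
    (a : ℝ) :
    (Nat.multinomial Finset.univ (occupation N u) : ℝ) * exp (N * a)
      = typeProb N u * exp (N * (a + -∑ k, simplexLift (latticePoint N u) k *
          Real.log (simplexLift (latticePoint N u) k))) := by
  have hNr : (0:ℝ) < N := by exact_mod_cast hN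
  have hprod : ∏ k, ((occupation N u k : ℝ) / N) ^ occupation N u k
      = exp (N * ∑ k, simplexLift (latticePoint N u) k *
          Real.log (simplexLift (latticePoint N u) k)) := by
    rw [Finset.mul_sum, Real.exp_sum]
    refine Finset.prod_congr rfl fun k _ => ?_
    rw [← occupation_div hN hu]
    rcases Nat.eq_zero_or_pos (occupation N u k) with h0 | h0
    · simp [h0]
    · have : (0:ℝ) < occupation N u k := by exact_mod_cast h0
      rw [← mul_assoc, mul_div_cancel₀ _ hNr.ne', mul_comm, Real.exp_mul, Real.exp_log (by positivity),
        Real.rpow_natCast]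
  rw [typeProb, hprod, mul_assoc, ← Real.exp_add]
  congr 2
  ring

open scoped Topology in
lemma tendsto_pow_mul_exp_neg {ε : ℝ} (hε : 0 < ε) (d : ℕ) :
    Tendsto (fun N : ℕ => ((N : ℝ) + 1) ^ d * exp (-ε * N)) atTop (𝓝 0) := by
  have h := tendsto_pow_const_mul_const_pow_of_lt_one d (exp_pos (-ε)).le
    (by rw [← Real.exp_zero]; exact Real.exp_lt_exp.2 (by linarith))
  have h2 := ((tendsto_add_atTop_iff_nat 1).2 h).mul_const (exp ε)
  rw [zero_mul] at h2
  refine h2.congr fun N => ?_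
  rw [← Real.exp_nat_mul, mul_assoc, ← Real.exp_add]
  push_cast
  congr 2
  ring

/-! ### Local and global estimates on the simplex -/

lemma isCompact_simplexChart (d : ℕ) :
    IsCompact {x : Fin d → ℝ | (∀ k, 0 ≤ x k) ∧ ∑ k, x k ≤ 1} := by
  have hcl : IsClosed {x : Fin d → ℝ | (∀ k, 0 ≤ x k) ∧ ∑ k, x k ≤ 1} := by
    rw [Set.ofPred_and]
    refine IsClosed.inter ?_ (isClosed_le (by fun_prop) continuous_const)
    rw [Set.ofPred_forall]
    exact isClosed_iInter fun k => isClosed_le continuous_const (continuous_apply k)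
  refine (isCompact_Icc (a := (0 : Fin d → ℝ)) (b := 1)).of_isClosed_subset hcl ?_
  rintro x ⟨h1, h2⟩
  exact ⟨h1, fun k =>
    (Finset.single_le_sum (f := x) (fun k _ => h1 k) (Finset.mem_univ k)).trans h2⟩

lemma simplexLift_pos_of_interior {d : ℕ} (hd : 1 ≤ d) {x : Fin d → ℝ}
    (hx : x ∈ interior {x : Fin d → ℝ | (∀ k, 0 ≤ x k) ∧ ∑ k, x k ≤ 1}) (k : Fin (d + 1)) :
    0 < simplexLift x k := by
  obtain ⟨r, hr, hball⟩ := Metric.mem_nhds_iff.1 (mem_interior_iff_mem_nhds.1 hx)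
  have hone : ‖(fun _ => r / 2 : Fin d → ℝ)‖ < r := by
    refine (pi_norm_lt_iff hr).2 fun _ => ?_
    rw [Real.norm_eq_abs, abs_of_pos (by positivity)]
    linarith
  have h1 := hball (show x - (fun _ => r / 2) ∈ Metric.ball x r by
    rw [Metric.mem_ball, dist_eq_norm]; simpa using hone)
  have h2 := hball (show x + (fun _ => r / 2) ∈ Metric.ball x r by
    rw [Metric.mem_ball, dist_eq_norm]; simpa using hone)
  refine Fin.lastCases ?_ (fun k => ?_) k
  · have h3 := h2.2
    simp only [Pi.add_apply, Finset.sum_add_distrib, Finset.sum_const, Finset.card_univ,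
      Fintype.card_fin, nsmul_eq_mul] at h3
    have hd' : (1:ℝ) ≤ d := by exact_mod_cast hd
    simp only [simplexLift, Fin.snoc_last]
    nlinarith
  · have h3 := h1.1 k
    simp only [Pi.sub_apply] at h3
    simp only [simplexLift, Fin.snoc_castSucc]
    linarith

open scoped Matrix Topology in
/-- Near a nondegenerate maximizer in the open simplex, the coordinates stay bounded away from `0`
and `G` lies below a downward paraboloid. -/
lemma exists_local_constants {d : ℕ} {G : (Fin d → ℝ) → ℝ} {M : Fin d → ℝ}
    {H : Matrix (Fin d) (Fin d) ℝ} (hH : H.PosDef) (hpos : ∀ k, 0 < simplexLift M k)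
    (h3 : (fun x => G x - G M + ((x - M) ⬝ᵥ H *ᵥ (x - M)) / 2) =o[𝓝 M] fun x => ‖x - M‖ ^ 2) :
    ∃ δ > 0, ∃ c > 0, ∃ lam > 0, (∀ x, ‖x - M‖ ≤ δ → ∀ k, c ≤ simplexLift x k) ∧
      ∀ x, ‖x - M‖ ≤ δ → G x - G M ≤ -lam * ‖x - M‖ ^ 2 := by
  obtain ⟨κ, hκ, hco⟩ := posDef_coercive hH
  obtain ⟨k0, hk0⟩ := Finite.exists_min (simplexLift M)
  have e1 : ∀ᶠ x in 𝓝 M, ∀ k, simplexLift M k0 / 2 ≤ simplexLift x k := by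
    rw [eventually_all]
    intro k
    have hc : Tendsto (fun x => simplexLift x k) (𝓝 M) (𝓝 (simplexLift M k)) :=
      ((continuous_apply k).comp continuous_simplexLift).tendsto M
    refine hc.eventually (le_mem_nhds ?_)
    have := hk0 k
    have := hpos k0
    linarith
  have e2 := h3.def (show 0 < κ / 4 by positivity)
  obtain ⟨r, hr, hball⟩ := Metric.eventually_nhds_iff_ball.1 (e1.and e2)
  have hmem : ∀ x, ‖x - M‖ ≤ r / 2 → x ∈ Metric.ball M r := fun x hx => by
    rw [Metric.mem_ball, dist_eq_norm]; linarith
  refine ⟨r / 2, by positivity, simplexLift M k0 / 2, by have := hpos k0; positivity,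
    κ / 4, by positivity, fun x hx => (hball x (hmem x hx)).1, fun x hx => ?_⟩
  have h := (hball x (hmem x hx)).2
  rw [norm_pow, norm_norm, Real.norm_eq_abs] at h
  have h' := (abs_le.1 h).2
  have := hco (x - M)
  nlinarith

/-- By compactness, `G` stays a fixed amount below its maximum away from the maximizers. -/
lemma far_gap {d p : ℕ} {K : Set (Fin d → ℝ)} (hK : IsCompact K) {G : (Fin d → ℝ) → ℝ}
    (hGc : ContinuousOn G K) {M : Fin p → Fin d → ℝ} {g : ℝ} (hg : ∀ x ∈ K, G x ≤ g)
    (honly : ∀ x ∈ K, G x = g → ∃ j, x = M j) {δ : ℝ} (hδ : 0 < δ) :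
    ∃ ε > 0, ∀ x ∈ K, (∀ j, δ < ‖x - M j‖) → G x - g ≤ -ε := by
  have hcl : IsClosed {x : Fin d → ℝ | ∀ j, δ ≤ ‖x - M j‖} := by
    rw [Set.ofPred_forall]
    exact isClosed_iInter fun j => isClosed_le continuous_const (by fun_prop)
  have hK' := hK.inter_right hcl
  rcases (K ∩ {x : Fin d → ℝ | ∀ j, δ ≤ ‖x - M j‖}).eq_empty_or_nonempty with he | hne
  · refine ⟨1, one_pos, fun x hx hf => ?_⟩
    have : x ∈ K ∩ {x : Fin d → ℝ | ∀ j, δ ≤ ‖x - M j‖} := ⟨hx, fun j => (hf j).le⟩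
    rw [he] at this
    exact this.elim
  · obtain ⟨x0, hx0, hmax⟩ := hK'.exists_isMaxOn hne (hGc.mono Set.inter_subset_left)
    have hlt : G x0 < g := by
      refine lt_of_le_of_ne (hg x0 hx0.1) fun h => ?_
      obtain ⟨j, hj⟩ := honly x0 hx0.1 h
      have := hx0.2 j
      rw [hj, sub_self, norm_zero] at this
      linarith
    refine ⟨g - G x0, by linarith, fun x hx hf => ?_⟩
    have : G x ≤ G x0 := hmax (show x ∈ _ from ⟨hx, fun j => (hf j).le⟩)
    linarith

lemma sum_near_add_far {ι : Type*} {p : ℕ} (T : Finset ι) (a : ι → ℝ) (P : Fin p → ι → Prop)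
    [∀ j, DecidablePred (P j)] (hP : ∀ u i j, P i u → P j u → i = j) :
    ∑ u ∈ T, a u = ∑ j, ∑ u ∈ T with P j u, a u + ∑ u ∈ T with ∀ j, ¬ P j u, a u := by
  classical
  simp only [Finset.sum_filter]
  rw [Finset.sum_comm, ← Finset.sum_add_distrib]
  refine Finset.sum_congr rfl fun u _ => ?_
  by_cases h : ∃ j, P j u
  · obtain ⟨j, hj⟩ := h
    rw [Finset.sum_eq_single j (fun i _ hi => if_neg fun hPi => hi (hP u i j hPi hj)) (by simp),
      if_pos hj, if_neg (fun h => h j hj), add_zero]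
  · push Not at h
    simp [h]

/-- Under assumptions (A) and (B), the partition function satisfies
`Z_N ~ |w| exp(N sup_{m̂ ∈ Δ̂} G(m̂))` as `N → ∞`.
We parametrize `q = d + 1` with `d ≥ 1` (i.e. `q ≥ 2`). -/
theorem stmt_0
    (d p : ℕ) (hd : 1 ≤ d) (hp : 1 ≤ p)
    (F : (Fin (d + 1) → ℝ) → ℝ)
    (hF : ContDiffOn ℝ 2 F {m : Fin (d + 1) → ℝ | (∀ k, 0 ≤ m k) ∧ ∑ k, m k = 1})
    (ent : (Fin (d + 1) → ℝ) → ℝ)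
    (hent : ∀ m, ent m = -∑ k, m k * Real.log (m k))
    (G : (Fin d → ℝ) → ℝ)
    (hG : ∀ x : Fin d → ℝ,
      G x = F (Fin.snoc x (1 - ∑ k, x k)) + ent (Fin.snoc x (1 - ∑ k, x k)))
    (Δhat : Set (Fin d → ℝ))
    (hΔhat : Δhat = {x : Fin d → ℝ | (∀ k, 0 ≤ x k) ∧ ∑ k, x k ≤ 1})
    -- (A): the global maximizers of `G` on `Δ̂` are exactly the `p` distinct points
    -- `M 1, …, M p`, all lying in the interior of `Δ̂`
    (M : Fin p → Fin d → ℝ)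
    (hMinj : Function.Injective M)
    (hMint : ∀ j, M j ∈ interior Δhat)
    (hMmax : ∀ j, ∀ x ∈ Δhat, G x ≤ G (M j))
    (hMonly : ∀ x ∈ Δhat, (∀ y ∈ Δhat, G y ≤ G x) → ∃ j, x = M j)
    -- (B): `H_j = -Hess G (M_j)` is positive definite
    (H : Fin p → Matrix (Fin d) (Fin d) ℝ)
    (hH : ∀ j k l, H j k l =
      -(fderiv ℝ (fun x => fderiv ℝ G x (Pi.single l 1)) (M j)) (Pi.single k 1))
    (hHpd : ∀ j, (H j).PosDef)
    (Mfull : Fin p → Fin (d + 1) → ℝ)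
    (hMfull : ∀ j, Mfull j = Fin.snoc (M j) (1 - ∑ k, M j k))
    (w : Fin p → ℝ)
    (hw : ∀ j, w j = (Real.sqrt ((H j).det * ∏ k, Mfull j k))⁻¹)
    (Z : ℕ → ℝ)
    (hZ : ∀ N : ℕ, Z N = ∑ σ : Fin N → Fin (d + 1),
      Real.exp ((N : ℝ) * F (fun k => ((Finset.univ.filter fun i => σ i = k).card : ℝ) / N))) :
    Tendsto (fun N : ℕ =>
        Z N / ((∑ j, w j) * Real.exp ((N : ℝ) * sSup (G '' Δhat)))) atTop (nhds 1) := by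
  subst hΔhat
  set Δ := {x : Fin d → ℝ | (∀ k, 0 ≤ x k) ∧ ∑ k, x k ≤ 1} with hΔ
  have hG' : ∀ x, G x = F (simplexLift x) +
      -∑ k, simplexLift x k * Real.log (simplexLift x k) := by
    intro x
    rw [hG x, hent]
    rfl
  have hMfull' : ∀ j, Mfull j = simplexLift (M j) := hMfull
  have hMΔ : ∀ j, M j ∈ Δ := fun j => interior_subset (hMint j)
  have hpos : ∀ j k, 0 < simplexLift (M j) k := fun j => simplexLift_pos_of_interior hd (hMint j)
  -- The composition with the chart lives on a set with nonempty interior, so `G` is twice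
  -- continuously differentiable in the usual sense at each `M j`.
  have hFc : ContDiffOn ℝ 2 (fun x => F (simplexLift x)) Δ :=
    hF.comp contDiff_simplexLift.contDiffOn fun x hx => ⟨simplexLift_mem.2 hx, sum_simplexLift x⟩
  have hGfun : G = fun x => F (simplexLift x) +
      -∑ k, simplexLift x k * Real.log (simplexLift x k) := funext hG'
  have hGc : ContinuousOn G Δ := by
    rw [hGfun]
    refine hFc.continuousOn.add (Continuous.continuousOn ?_)
    refine (continuous_finsetSum _ fun k _ => ?_).neg
    exact Real.continuous_mul_log.comp ((continuous_apply k).comp continuous_simplexLift)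
  have hG2 : ∀ j, ContDiffAt ℝ 2 G (M j) := by
    intro j
    rw [hGfun]
    refine (hFc.contDiffAt (mem_interior_iff_mem_nhds.1 (hMint j))).add
      (ContDiffAt.neg (ContDiffAt.sum fun k _ => ?_))
    have hk : ContDiffAt ℝ 2 (fun x : Fin d → ℝ => simplexLift x k) (M j) :=
      (contDiff_pi.1 contDiff_simplexLift k).contDiffAt
    exact hk.mul (hk.log (hpos j k).ne')
  have hG0 : ∀ j, fderiv ℝ G (M j) = 0 := by
    intro j
    refine IsLocalMax.fderiv_eq_zero ?_
    filter_upwards [mem_interior_iff_mem_nhds.1 (hMint j)] with x hx using hMmax j x hx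
  have htay := fun j => taylor_two (hG2 j) (hG0 j) (hHpd j).isHermitian (hH j)
  set g := G (M ⟨0, hp⟩) with hg
  have hgM : ∀ j, G (M j) = g := fun j =>
    le_antisymm (hMmax _ _ (hMΔ j)) (hMmax _ _ (hMΔ _))
  have hsup : sSup (G '' Δ) = g := by
    refine IsGreatest.csSup_eq ⟨⟨_, hMΔ _, rfl⟩, ?_⟩
    rintro _ ⟨x, hx, rfl⟩
    exact hMmax _ x hx
  -- a common radius: inside the balls of the local estimates, and separating the maximizers
  choose δ0 hδ0 c hc lam hlam h1 h2 using
    fun j => exists_local_constants (hHpd j) (hpos j) (htay j)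
  obtain ⟨δ, hδ, hδle, hsep⟩ : ∃ δ > 0, (∀ j, δ ≤ δ0 j) ∧
      ∀ i j, i ≠ j → 2 * δ < ‖M i - M j‖ := by
    have e1 : ∀ᶠ δ : ℝ in nhdsWithin 0 (Set.Ioi 0), ∀ j, δ ≤ δ0 j :=
      eventually_all.2 fun j => nhdsWithin_le_nhds (ge_mem_nhds (hδ0 j))
    have e2 : ∀ᶠ δ : ℝ in nhdsWithin 0 (Set.Ioi 0), ∀ i j, i ≠ j → 2 * δ < ‖M i - M j‖ := by
      refine eventually_all.2 fun i => eventually_all.2 fun j => ?_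
      by_cases hij : i = j
      · exact Eventually.of_forall fun _ h => (h hij).elim
      · have : 0 < ‖M i - M j‖ / 2 := by
          have := norm_pos_iff.2 (sub_ne_zero.2 (hMinj.ne hij))
          positivity
        filter_upwards [nhdsWithin_le_nhds (gt_mem_nhds this)] with δ hδ _
        have hδ' : δ < ‖M i - M j‖ / 2 := hδ
        linarith
    obtain ⟨δ, ⟨h1, h2⟩, h3⟩ := ((e1.and e2).and self_mem_nhdsWithin).exists
    exact ⟨δ, h3, h1, h2⟩
  have hnear : ∀ j, Tendsto (fun N : ℕ =>
      ∑ u ∈ latticeSimplex d N with ‖latticePoint N u - M j‖ ≤ δ,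
        typeProb N u * exp (N * (G (latticePoint N u) - g))) atTop (nhds (w j)) := by
    intro j
    have := tendsto_near_sum (hHpd j) hδ (hc j) (hlam j)
      (fun x hx => h1 j x (hx.trans (hδle j))) (fun x hx => h2 j x (hx.trans (hδle j))) (htay j)
    rw [hw, hMfull' j]
    rwa [hgM j] at this
  obtain ⟨ε, hε, hfar⟩ := far_gap (isCompact_simplexChart d) hGc (M := M) (g := g)
    (fun x hx => hMmax _ x hx)
    (fun x hx hxg => hMonly x hx fun y hy => by rw [hxg]; exact hMmax _ y hy) hδ
  have hlatt : ∀ N : ℕ, 0 < N → ∀ u ∈ latticeSimplex d N, latticePoint N u ∈ Δ := by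
    intro N hN u hu
    refine simplexLift_mem.1 fun k => ?_
    rw [← occupation_div hN hu]
    positivity
  have hfar0 : Tendsto (fun N : ℕ =>
      ∑ u ∈ latticeSimplex d N with ∀ j, ¬ ‖latticePoint N u - M j‖ ≤ δ,
        typeProb N u * exp (N * (G (latticePoint N u) - g))) atTop (nhds 0) := by
    refine squeeze_zero' (Eventually.of_forall fun N => Finset.sum_nonneg fun u _ =>
      mul_nonneg (typeProb_nonneg _ _) (exp_pos _).le) ?_ (tendsto_pow_mul_exp_neg hε d)
    filter_upwards [eventually_gt_atTop 0] with N hN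
    have hb : ∀ u ∈ (latticeSimplex d N).filter (fun u => ∀ j, ¬ ‖latticePoint N u - M j‖ ≤ δ),
        typeProb N u * exp (N * (G (latticePoint N u) - g)) ≤ exp (-ε * N) := by
      intro u hu
      obtain ⟨hu1, hu2⟩ := Finset.mem_filter.1 hu
      have hb1 := hfar _ (hlatt N hN u hu1) fun j => not_le.1 (hu2 j)
      have hb2 : exp (N * (G (latticePoint N u) - g)) ≤ exp (-ε * N) := by
        refine Real.exp_le_exp.2 ?_
        have := mul_le_mul_of_nonneg_left hb1 (Nat.cast_nonneg (α := ℝ) N)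
        linarith
      calc _ ≤ 1 * exp (-ε * N) :=
            mul_le_mul (typeProb_le_one hN hu1) hb2 (exp_pos _).le zero_le_one
        _ = _ := one_mul _
    refine (Finset.sum_le_card_nsmul _ _ _ hb).trans ?_
    rw [nsmul_eq_mul]
    refine mul_le_mul_of_nonneg_right ?_ (exp_pos _).le
    exact_mod_cast (Finset.card_filter_le _ _).trans (card_latticeSimplex_le d N)
  have htotal := (tendsto_finsetSum Finset.univ fun j _ => hnear j).add hfar0
  rw [add_zero] at htotal
  have hwpos : 0 < ∑ j, w j := by
    have : Nonempty (Fin p) := ⟨⟨0, hp⟩⟩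
    refine Finset.sum_pos (fun j _ => ?_) Finset.univ_nonempty
    rw [hw, hMfull' j]
    exact inv_pos.2 (Real.sqrt_pos.2
      (mul_pos (hHpd j).det_pos (Finset.prod_pos fun k _ => hpos j k)))
  have hratio := htotal.div_const (∑ j, w j)
  rw [div_self hwpos.ne'] at hratio
  refine hratio.congr' ?_
  filter_upwards [eventually_gt_atTop 0] with N hN
  rw [← sum_near_add_far (latticeSimplex d N)
    (fun u => typeProb N u * exp (N * (G (latticePoint N u) - g)))
    (fun j u => ‖latticePoint N u - M j‖ ≤ δ), hsup, hZ,
    sum_config_eq hN (fun m => exp (N * F m)), mul_comm (∑ j, w j), ← div_div]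
  · congr 1
    rw [Finset.sum_div]
    refine Finset.sum_congr rfl fun u hu => ?_
    rw [multinomial_mul_exp hN hu, ← hG', mul_div_assoc, ← Real.exp_sub]
    congr 2
    ring
  · intro u i j hi hj
    by_contra hij
    have := hsep i j hij
    have h3 := norm_sub_le_norm_sub_add_norm_sub (M i) (latticePoint N u) (M j)
    rw [norm_sub_rev (M i) (latticePoint N u)] at h3
    linarith
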